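/- arXiv:2308.07917 — 3 statements merged into one kernel-verified Lean document; each statement's English description precedes it below -/
import Mathlib

section
/- Let d ≥ 2 be an integer and 2 < q < 2d/(d−2) (2 < q < ∞ if d = 2). Then ξ := 𝔟 − 𝔞 satisfies (d−2)/(d−1) < ξ < 1. In particular, ξ is a strictly monotone function of q on this range, with boundary values (d−2)/(d−1) at q = 2 and 1 at q = 2d/(d−2). -/
/-!
With `c = d / (2(d-1))`, `u = q - 2` and `S = √(1 + c (q² - 4))`, one has `ξ = 2 - t` where
`t = (S - 1) / u` is the slope of the chord of the hyperbola `S² = 1 + c (q² - 4)` from its point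
`(2, 1)`. Dividing the equation of the hyperbola by `u` gives the relation
`t² u + 2 t = c u + 4 c` (`xiSlope_rel`), and the bounds `1 < t < 2c` and the strict monotonicity
of `t` follow from it by elementary algebra, using `c > 1/2`. Since
`2 - 2c = (d-2)/(d-1)`, these are the claimed bounds for `ξ`.

For finite endpoints the limits come from the rationalised form `t = c (q + 2) / (S + 1)`, which is
continuous at `q = 2` and at `q = 2d/(d-2)` (where `S = q - 1`). For `d = 2` one has `c = 1` and the
relation reads `(t - 1) ((t + 1) u + 2) = 2`, so `0 < t - 1 ≤ 2 / u → 0`.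
-/


open Filter Topology

noncomputable section

/-- 𝔞 = √(1 + 2d/Λ)/(q-2). -/
def afrak (d : ℕ) (q Λ : ℝ) : ℝ := Real.sqrt (1 + 2 * d / Λ) / (q - 2)

/-- 𝔟 = (2q-3)/(q-2). -/
def bfrak (q : ℝ) : ℝ := (2 * q - 3) / (q - 2)

/-- ξ = 𝔟 - 𝔞. -/
def xiV (d : ℕ) (q Λ : ℝ) : ℝ := bfrak q - afrak d q Λ

/-- The function P built from Gamma factors. -/
def Pfun (d : ℕ) (q Λ : ℝ) (x : ℝ) : ℝ :=
  Real.Gamma (x + 3 / 2) * Real.Gamma (x + 2 * bfrak q - 1) * Real.Gamma (x + 2 * bfrak q) /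
    (Real.Gamma (x + bfrak q - afrak d q Λ + 1) * Real.Gamma (x + bfrak q + afrak d q Λ + 1) *
      Real.Gamma (x + 2 * bfrak q + 1 / 2))

/-- The constant J(q,d). -/
def Jconst (d : ℕ) (q Λ : ℝ) : ℝ :=
  (q - 2) * (3 * q - 2) / (2 * (5 * q - 6)) *
    ((3 * q - 4) / (4 * (q - 1)) - (q - 3) * d / (q * (d + 2)) -
      (d - 1) / (d + 2) *
        ∑' k : ℕ, (Pfun d q Λ ((k : ℝ) - xiV d q Λ) - Pfun d q Λ (k : ℝ)) / Pfun d q Λ (-1))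

end

/-- ξ as a function of q, at the Felli–Schneider value Λ = 4(d-1)/(q²-4). -/
noncomputable def xiFS (d : ℕ) (q : ℝ) : ℝ := xiV d q (4 * ((d : ℝ) - 1) / (q ^ 2 - 4))

/-- The constant `c = d / (2(d-1))` for which `2d/Λ = c (q² - 4)` at the Felli–Schneider value. -/
noncomputable def xiCoef (d : ℕ) : ℝ := (d : ℝ) / (2 * ((d : ℝ) - 1))

/-- The chord slope `t = c (q + 2) / (S + 1)`, in the form that is also regular at `q = 2`. -/
noncomputable def xiSlope (d : ℕ) (q : ℝ) : ℝ :=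
  xiCoef d * (q + 2) / (Real.sqrt (1 + xiCoef d * (q ^ 2 - 4)) + 1)

lemma xiCoef_gt {d : ℕ} (hd : 2 ≤ d) : 1 / 2 < xiCoef d := by
  have h : (2 : ℝ) ≤ d := by exact_mod_cast hd
  rw [xiCoef, lt_div_iff₀ (by linarith)]
  linarith

lemma xiSlope_pos {d : ℕ} (hd : 2 ≤ d) {q : ℝ} (hq : 2 < q) : 0 < xiSlope d q := by
  have := xiCoef_gt hd
  unfold xiSlope
  have := Real.sqrt_nonneg (1 + xiCoef d * (q ^ 2 - 4))
  apply div_pos <;> nlinarith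

lemma xiFS_eq {d : ℕ} (hd : 2 ≤ d) {q : ℝ} (hq : 2 < q) : xiFS d q = 2 - xiSlope d q := by
  have h : (2 : ℝ) ≤ d := by exact_mod_cast hd
  have hc := xiCoef_gt hd
  have hd1 : (d : ℝ) - 1 ≠ 0 := by linarith
  have hq4 : 0 < q ^ 2 - 4 := by nlinarith
  have harg : 1 + 2 * (d : ℝ) / (4 * ((d : ℝ) - 1) / (q ^ 2 - 4))
      = 1 + xiCoef d * (q ^ 2 - 4) := by
    have := hq4.ne'
    unfold xiCoef
    field_simp
    ring
  unfold xiFS xiV afrak bfrak xiSlope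
  rw [harg]
  have hsq := Real.sq_sqrt (show 0 ≤ 1 + xiCoef d * (q ^ 2 - 4) by nlinarith)
  have hS := Real.sqrt_nonneg (1 + xiCoef d * (q ^ 2 - 4))
  set S := Real.sqrt (1 + xiCoef d * (q ^ 2 - 4))
  have h1 : q - 2 ≠ 0 := by linarith
  have h2 : S + 1 ≠ 0 := by linarith
  field_simp
  linear_combination -hsq

/-- The equation of the hyperbola, divided by `q - 2`. -/
lemma xiSlope_rel {d : ℕ} (hd : 2 ≤ d) {q : ℝ} (hq : 2 < q) :
    xiSlope d q ^ 2 * (q - 2) + 2 * xiSlope d q = xiCoef d * (q - 2) + 4 * xiCoef d := by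
  have hc := xiCoef_gt hd
  unfold xiSlope
  have hq4 : 0 < q ^ 2 - 4 := by nlinarith
  have hsq := Real.sq_sqrt (show 0 ≤ 1 + xiCoef d * (q ^ 2 - 4) by nlinarith)
  have hS := Real.sqrt_nonneg (1 + xiCoef d * (q ^ 2 - 4))
  set S := Real.sqrt (1 + xiCoef d * (q ^ 2 - 4))
  have h2 : S + 1 ≠ 0 := by linarith
  field_simp
  linear_combination -(q + 2) * hsq

lemma xiSlope_lt {d : ℕ} (hd : 2 ≤ d) {q : ℝ} (hq : 2 < q) : xiSlope d q < 2 * xiCoef d := by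
  have hc := xiCoef_gt hd
  have hr := xiSlope_rel hd hq
  by_contra! h
  have h1 : xiCoef d < xiSlope d q ^ 2 := by nlinarith
  nlinarith [mul_lt_mul_of_pos_right h1 (show 0 < q - 2 by linarith)]

lemma one_lt_xiSlope {d : ℕ} (hd : 2 ≤ d) {q : ℝ} (hq : 2 < q)
    (hq' : d = 2 ∨ q < 2 * d / ((d : ℝ) - 2)) : 1 < xiSlope d q := by
  have h : (2 : ℝ) ≤ d := by exact_mod_cast hd
  have ht := xiSlope_pos hd hq
  have hr := xiSlope_rel hd hq
  have hkey : ((d : ℝ) - 2) * (q - 2) < 4 := by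
    rcases hq' with rfl | hq'
    · norm_num
    · rcases h.eq_or_lt with h0 | h0
      · rw [← h0]; norm_num
      · rw [lt_div_iff₀ (by linarith)] at hq'
        nlinarith
  have hc : xiCoef d * (2 * ((d : ℝ) - 1)) = d := by
    unfold xiCoef
    exact div_mul_cancel₀ _ (by linarith)
  by_contra! h1
  have h2 : xiSlope d q ^ 2 ≤ 1 := by nlinarith
  have h3 := mul_le_mul_of_nonneg_right h2 (show 0 ≤ q - 2 by linarith)
  have h4 : xiCoef d * (q - 2) + 4 * xiCoef d ≤ (q - 2) + 2 := by linarith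
  have h5 := mul_le_mul_of_nonneg_right h4 (show 0 ≤ 2 * ((d : ℝ) - 1) by linarith)
  have h6 : (xiCoef d * (q - 2) + 4 * xiCoef d) * (2 * ((d : ℝ) - 1)) = d * (q + 2) := by
    linear_combination (q + 2) * hc
  nlinarith

lemma xiSlope_anti {d : ℕ} (hd : 2 ≤ d) {x y : ℝ} (hx : 2 < x) (hxy : x < y) :
    xiSlope d y < xiSlope d x := by
  have hc := xiCoef_gt hd
  have htx := xiSlope_pos hd hx
  have hrx := xiSlope_rel hd hx
  have hry := xiSlope_rel hd (hx.trans hxy)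
  by_contra! h
  have h1 : xiSlope d x ^ 2 ≤ xiSlope d y ^ 2 := by gcongr
  have h2 := mul_le_mul_of_nonneg_right h1 (show 0 ≤ y - 2 by linarith)
  -- Subtracting the two relations bounds the slope by that of the asymptote.
  have h3 : xiSlope d x ^ 2 ≤ xiCoef d := by
    have : xiSlope d x ^ 2 * (y - x) ≤ xiCoef d * (y - x) := by nlinarith
    exact le_of_mul_le_mul_right this (by linarith)
  have h4 := mul_le_mul_of_nonneg_right h3 (show 0 ≤ x - 2 by linarith)
  have h5 : 2 * xiCoef d ≤ xiSlope d x := by linarith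
  nlinarith

lemma xiCoef_two_sub {d : ℕ} (hd : 2 ≤ d) :
    ((d : ℝ) - 2) / ((d : ℝ) - 1) = 2 - 2 * xiCoef d := by
  have h : (2 : ℝ) ≤ d := by exact_mod_cast hd
  have hd1 : (d : ℝ) - 1 ≠ 0 := by linarith
  unfold xiCoef
  field_simp
  ring

lemma xiSlope_continuous (d : ℕ) : Continuous (xiSlope d) := by
  unfold xiSlope
  refine Continuous.div (by fun_prop) (by fun_prop) fun q => ?_
  positivity

lemma xiSlope_at_two (d : ℕ) : xiSlope d 2 = 2 * xiCoef d := by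
  unfold xiSlope
  norm_num
  ring

/-- At the critical exponent `q = 2d/(d-2)` one has `c (q + 2) = q` and `S = q - 1`. -/
lemma xiSlope_at_crit {d : ℕ} (hd : 3 ≤ d) : xiSlope d (2 * d / ((d : ℝ) - 2)) = 1 := by
  have h : (3 : ℝ) ≤ d := by exact_mod_cast hd
  have hd1 : (d : ℝ) - 1 ≠ 0 := by linarith
  have hd2 : (d : ℝ) - 2 ≠ 0 := by linarith
  have hq : 2 < 2 * (d : ℝ) / ((d : ℝ) - 2) := by
    rw [lt_div_iff₀ (by linarith)]
    linarith
  have hc : xiCoef d * (2 * d / ((d : ℝ) - 2) + 2) = 2 * d / ((d : ℝ) - 2) := by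
    unfold xiCoef
    field_simp
    ring
  unfold xiSlope
  set q := 2 * (d : ℝ) / ((d : ℝ) - 2)
  have hS : 1 + xiCoef d * (q ^ 2 - 4) = (q - 1) ^ 2 := by
    linear_combination (q - 2) * hc
  rw [hS, Real.sqrt_sq (by linarith), hc, sub_add_cancel, div_self (by linarith)]

/-- For an integer `d ≥ 2` and `2 < q < 2d/(d-2)` (`2 < q` if `d = 2`),
one has `(d-2)/(d-1) < ξ < 1`; moreover ξ is strictly monotone in q on this range, with
boundary value `(d-2)/(d-1)` at `q = 2` and `1` at `q = 2d/(d-2)` (at `q = ∞` if `d = 2`). -/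
theorem xi_bounds (d : ℕ) (hd : 2 ≤ d) (q : ℝ) (hq : 2 < q)
    (hq' : d = 2 ∨ q < 2 * d / ((d : ℝ) - 2)) :
    (((d : ℝ) - 2) / ((d : ℝ) - 1) < xiFS d q ∧ xiFS d q < 1) ∧
    StrictMonoOn (xiFS d) {q' : ℝ | 2 < q' ∧ (d = 2 ∨ q' < 2 * d / ((d : ℝ) - 2))} ∧
    Tendsto (xiFS d) (𝓝[>] 2) (𝓝 (((d : ℝ) - 2) / ((d : ℝ) - 1))) ∧
    (d = 2 → Tendsto (xiFS d) atTop (𝓝 1)) ∧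
    (3 ≤ d → Tendsto (xiFS d) (𝓝[<] (2 * d / ((d : ℝ) - 2))) (𝓝 1)) := by
  refine ⟨⟨?_, ?_⟩, ?_, ?_, ?_, ?_⟩
  · rw [xiCoef_two_sub hd, xiFS_eq hd hq]
    linarith [xiSlope_lt hd hq]
  · rw [xiFS_eq hd hq]
    linarith [one_lt_xiSlope hd hq hq']
  · rintro x ⟨hx, -⟩ y ⟨hy, -⟩ hxy
    rw [xiFS_eq hd hx, xiFS_eq hd hy]
    linarith [xiSlope_anti hd hx hxy]
  · have hlim : Tendsto (fun q => 2 - xiSlope d q) (𝓝[>] 2) (𝓝 (2 - xiSlope d 2)) :=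
      ((continuous_const.sub (xiSlope_continuous d)).tendsto 2).mono_left nhdsWithin_le_nhds
    rw [xiSlope_at_two, ← xiCoef_two_sub hd] at hlim
    refine hlim.congr' ?_
    filter_upwards [self_mem_nhdsWithin] with x hx
    exact (xiFS_eq hd hx).symm
  · rintro rfl
    have hlow : Tendsto (fun q : ℝ => 1 - 2 / (q - 2)) atTop (𝓝 1) := by
      have h : Tendsto (fun q : ℝ => 2 / (q - 2)) atTop (𝓝 0) :=
        (tendsto_atTop_add_const_right atTop (-2 : ℝ) tendsto_id).const_div_atTop 2
      simpa using h.const_sub 1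
    refine tendsto_of_tendsto_of_tendsto_of_le_of_le' hlow tendsto_const_nhds ?_ ?_
    · filter_upwards [eventually_gt_atTop 2] with x hx
      have ht := one_lt_xiSlope hd hx (Or.inl rfl)
      have hr := xiSlope_rel hd hx
      have hc : xiCoef 2 = 1 := by norm_num [xiCoef]
      rw [hc] at hr
      have hb : xiSlope 2 x - 1 ≤ 2 / (x - 2) := by
        rw [le_div_iff₀ (by linarith)]
        have := mul_nonneg (mul_nonneg (sub_nonneg.2 ht.le) (sub_nonneg.2 hx.le))
          (show 0 ≤ xiSlope 2 x by linarith)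
        nlinarith
      rw [xiFS_eq hd hx]
      linarith
    · filter_upwards [eventually_gt_atTop 2] with x hx
      rw [xiFS_eq hd hx]
      linarith [one_lt_xiSlope hd hx (Or.inl rfl)]
  · intro h3
    have h : (3 : ℝ) ≤ d := by exact_mod_cast h3
    have hcrit : 2 < 2 * (d : ℝ) / ((d : ℝ) - 2) := by
      rw [lt_div_iff₀ (by linarith)]
      linarith
    have hlim : Tendsto (fun q => 2 - xiSlope d q) (𝓝[<] (2 * d / ((d : ℝ) - 2)))
        (𝓝 (2 - xiSlope d (2 * d / ((d : ℝ) - 2)))) :=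
      ((continuous_const.sub (xiSlope_continuous d)).tendsto _).mono_left nhdsWithin_le_nhds
    rw [xiSlope_at_crit h3, show (2 : ℝ) - 1 = 1 by norm_num] at hlim
    refine hlim.congr' ?_
    filter_upwards [nhdsWithin_le_nhds (lt_mem_nhds hcrit)] with x hx
    exact (xiFS_eq hd hx).symm
end

section
/- Let (D_k)_{k≥0} be a sequence of non-negative real numbers such that L := lim_{k→∞} k^{1/2} D_k exists. Then lim_{σ→0⁺} tanh(σ) Σ_{k=0}^∞ D_k cosh^{−2k}(σ) = √π · L. Equivalently, lim_{ζ→0⁺} ζ^{1/2} Σ_{k=0}^∞ D_k e^{−kζ} = √π · L. -/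
/-!
The sums `∑ D k * cosh σ ^ (-2 k)` and `∑ D k * exp (-k ζ)` are both values of the power series
`∑ D k * x ^ k` at a point `x < 1` tending to `1`: for `x = (cosh σ)⁻²` one has exactly
`tanh σ = √(1 - x)`, and for `x = exp (-ζ)` one has `√ζ ∼ √(1 - x)`. Hence both limits follow from
`√(1 - x) * ∑ D k * x ^ k → √π * L` as `x → 1⁻` (`tendsto_sqrt_mul_tsum`).

To obtain the latter, `D` is compared with the Taylor coefficients `c k` of `(1 - x) ^ (-1/2)`, for
which `√(1 - x) * ∑ c k * x ^ k = 1` identically. Euler's limit formula for `Γ(1/2) = √π` gives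
`√k * c k → 1 / √π`, so `D k - √π * L * c k = o(c k)`. A sequence that is `o(c k)` contributes at
most `ε` plus `√(1 - x)` times a constant coming from finitely many terms.
-/

open Filter Topology Real

/-- The Taylor coefficient `(1/2)(3/2)⋯(n - 1/2) / n!` of `(1 - x) ^ (-1/2)`. -/
noncomputable def halfCoeff (n : ℕ) : ℝ :=
  (∏ j ∈ Finset.range n, ((1 / 2 : ℝ) + j)) / n.factorial

lemma halfCoeff_nonneg (n : ℕ) : 0 ≤ halfCoeff n := by
  unfold halfCoeff
  positivity

lemma halfCoeff_eq_choose (n : ℕ) : Ring.choose ((1 / 2 : ℝ) + n - 1) n = halfCoeff n := by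
  have h := Ring.factorial_nsmul_multichoose_eq_ascPochhammer (1 / 2 : ℝ) n
  have hprod : ∀ m : ℕ, (ascPochhammer ℕ m).smeval (1 / 2 : ℝ)
      = ∏ j ∈ Finset.range m, ((1 / 2 : ℝ) + j) := by
    intro m
    rw [Polynomial.ascPochhammer_smeval_eq_eval]
    induction m with
    | zero => simp
    | succ m ih => rw [ascPochhammer_succ_eval, ih, Finset.prod_range_succ]
  rw [hprod, nsmul_eq_mul] at h
  have hn : (n.factorial : ℝ) ≠ 0 := by positivity
  rw [halfCoeff, Ring.choose, eq_div_iff hn, ← h, mul_comm]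
  congr 2
  ring

lemma hasSum_halfCoeff {x : ℝ} (h0 : 0 < x) (h1 : x < 1) :
    HasSum (fun k => halfCoeff k * x ^ k) (√(1 - x))⁻¹ := by
  have h := (Real.one_div_one_sub_rpow_hasFPowerSeriesOnBall_zero (1 / 2)).hasSum (y := x) (by
    simp [enorm_eq_nnnorm, ← NNReal.coe_lt_coe, abs_of_pos h0, h1])
  simpa [Real.sqrt_eq_rpow, -one_div, one_div ((_ : ℝ) ^ (_ : ℝ)), ← halfCoeff_eq_choose,
    mul_comm] using h

/-- Euler's limit formula at `s = 1/2`, in terms of the coefficients `halfCoeff`. -/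
lemma tendsto_sqrt_mul_halfCoeff :
    Tendsto (fun k : ℕ => √(k : ℝ) * halfCoeff k) atTop (𝓝 (√π)⁻¹) := by
  have hG := Real.GammaSeq_tendsto_Gamma (1 / 2)
  rw [Real.Gamma_one_half_eq] at hG
  have hn : Tendsto (fun k : ℕ => (k : ℝ) / (k + 1 / 2)) atTop (𝓝 1) :=
    tendsto_natCast_div_add_atTop (1 / 2 : ℝ)
  have h := hn.mul (hG.inv₀ (by positivity))
  rw [one_mul] at h
  refine h.congr' ?_
  filter_upwards [eventually_gt_atTop 0] with k hk
  have hk' : (0 : ℝ) < k := by exact_mod_cast hk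
  have hs : √(k : ℝ) ≠ 0 := by positivity
  have hp : (∏ j ∈ Finset.range k, ((1 / 2 : ℝ) + j)) ≠ 0 := by positivity
  have hf : (k.factorial : ℝ) ≠ 0 := by positivity
  rw [Real.GammaSeq, ← Real.sqrt_eq_rpow, Finset.prod_range_succ, halfCoeff]
  have hk2 : (k : ℝ) + 1 / 2 ≠ 0 := by positivity
  have hk3 : (1 : ℝ) / 2 + k ≠ 0 := by positivity
  have hsq : (k : ℝ) = √(k : ℝ) * √(k : ℝ) := (Real.mul_self_sqrt hk'.le).symm
  rw [inv_div, div_mul_div_comm, mul_div_assoc', div_eq_div_iff (by positivity) hf]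
  linear_combination (k.factorial : ℝ) * (∏ j ∈ Finset.range k, ((1 / 2 : ℝ) + j)) *
    (1 / 2 + k) * hsq

/-- Splitting the power series of `e` at an index `N` from which on `|e| ≤ ε * halfCoeff`: the tail
contributes at most `ε`, the finitely many remaining terms are estimated by `x ^ k ≤ 1`. -/
lemma summable_and_abs_sqrt_mul_tsum_le {e : ℕ → ℝ} {ε : ℝ} {N : ℕ}
    (hN : ∀ k, N ≤ k → |e k| ≤ ε * halfCoeff k) (hε : 0 ≤ ε) {x : ℝ} (h0 : 0 < x) (h1 : x < 1) :
    Summable (fun k => e k * x ^ k) ∧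
      |√(1 - x) * ∑' k, e k * x ^ k| ≤ ε + √(1 - x) * ∑ k ∈ Finset.range N, |e k| := by
  have hA := (hasSum_halfCoeff h0 h1).mul_left ε
  have hB : HasSum (fun k => if k < N then |e k| else 0) (∑ k ∈ Finset.range N, |e k|) := by
    have := hasSum_sum_of_ne_finset_zero (f := fun k => if k < N then |e k| else 0)
      (s := Finset.range N) (L := .unconditional ℕ) (by intro b hb; simp at hb; simp [hb])
    convert! this using 1
    exact Finset.sum_congr rfl fun k hk => by simp [Finset.mem_range.1 hk]
  have hC := hA.add hB
  have hle : ∀ k, ‖e k * x ^ k‖ ≤ ε * (halfCoeff k * x ^ k) + if k < N then |e k| else 0 := by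
    intro k
    have hx : 0 ≤ x ^ k := by positivity
    have hc := halfCoeff_nonneg k
    rw [Real.norm_eq_abs, abs_mul, abs_of_nonneg hx]
    split_ifs with hk
    · have : |e k| * x ^ k ≤ |e k| := mul_le_of_le_one_right (abs_nonneg _) (pow_le_one₀ h0.le h1.le)
      have : 0 ≤ ε * (halfCoeff k * x ^ k) := by positivity
      linarith
    · have := mul_le_mul_of_nonneg_right (hN k (not_lt.1 hk)) hx
      linarith
  refine ⟨.of_norm_bounded hC.summable hle, ?_⟩
  have hb := tsum_of_norm_bounded hC hle
  have hs : 0 < √(1 - x) := Real.sqrt_pos.2 (by linarith)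
  rw [abs_mul, abs_of_pos hs]
  calc √(1 - x) * |∑' k, e k * x ^ k|
      ≤ √(1 - x) * (ε * (√(1 - x))⁻¹ + ∑ k ∈ Finset.range N, |e k|) :=
        mul_le_mul_of_nonneg_left hb hs.le
    _ = ε + √(1 - x) * ∑ k ∈ Finset.range N, |e k| := by field_simp

/-- The Abelian theorem for power series at `x → 1⁻`. -/
lemma tendsto_sqrt_mul_tsum (D : ℕ → ℝ) (L : ℝ)
    (hL : Tendsto (fun k : ℕ => √(k : ℝ) * D k) atTop (𝓝 L)) :
    Tendsto (fun x : ℝ => √(1 - x) * ∑' k : ℕ, D k * x ^ k) (𝓝[<] 1) (𝓝 (√π * L)) := by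
  set a := √π * L with ha
  set e : ℕ → ℝ := fun k => D k - a * halfCoeff k with he
  have hπ : 0 < √π := by positivity
  have hc := tendsto_sqrt_mul_halfCoeff
  have he0 : Tendsto (fun k : ℕ => √(k : ℝ) * e k) atTop (𝓝 0) := by
    have h := hL.sub (hc.const_mul a)
    have hz : L - a * (√π)⁻¹ = 0 := by rw [ha]; field_simp; ring
    rw [hz] at h
    refine h.congr fun k => ?_
    simp only [he]
    ring
  have hsmall : ∀ ε > 0, ∃ N, ∀ k, N ≤ k → |e k| ≤ ε * halfCoeff k := by
    intro ε hε
    have hpos : 0 < ε * (√π)⁻¹ := by positivity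
    have h1 := (hc.const_mul ε).sub he0
    have h2 := (hc.const_mul ε).add he0
    rw [sub_zero] at h1
    rw [add_zero] at h2
    obtain ⟨N, hN⟩ := eventually_atTop.1
      ((h1.eventually (lt_mem_nhds hpos)).and (h2.eventually (lt_mem_nhds hpos)))
    refine ⟨N, fun k hk => ?_⟩
    obtain ⟨h1, h2⟩ := hN k hk
    have hs := Real.sqrt_nonneg (k : ℝ)
    have h1' : 0 < √(k : ℝ) * (ε * halfCoeff k - e k) := by linarith
    have h2' : 0 < √(k : ℝ) * (ε * halfCoeff k + e k) := by linarith
    have h1 := pos_of_mul_pos_right h1' hs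
    have h2 := pos_of_mul_pos_right h2' hs
    exact abs_le.2 ⟨by linarith, by linarith⟩
  have hx0 : ∀ᶠ x : ℝ in 𝓝[<] 1, 0 < x := nhdsWithin_le_nhds (lt_mem_nhds one_pos)
  have hx1 : ∀ᶠ x : ℝ in 𝓝[<] 1, x < 1 := self_mem_nhdsWithin
  have hE : Tendsto (fun x : ℝ => √(1 - x) * ∑' k : ℕ, e k * x ^ k) (𝓝[<] 1) (𝓝 0) := by
    rw [Metric.tendsto_nhds]
    intro ε hε
    obtain ⟨N, hN⟩ := hsmall (ε / 2) (by positivity)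
    have hfin : Tendsto (fun x : ℝ => ε / 2 + √(1 - x) * ∑ k ∈ Finset.range N, |e k|)
        (𝓝[<] 1) (𝓝 (ε / 2)) := by
      have hcont : Continuous fun x : ℝ => ε / 2 + √(1 - x) * ∑ k ∈ Finset.range N, |e k| := by
        fun_prop
      exact (hcont.tendsto' 1 _ (by simp)).mono_left nhdsWithin_le_nhds
    filter_upwards [hx0, hx1, hfin.eventually (gt_mem_nhds (half_lt_self hε))] with x h0 h1 hlt
    rw [Real.dist_eq, sub_zero]
    exact (summable_and_abs_sqrt_mul_tsum_le hN (by positivity) h0 h1).2.trans_lt hlt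
  have hsum := hE.add_const a
  rw [zero_add] at hsum
  refine hsum.congr' ?_
  filter_upwards [hx0, hx1] with x h0 h1
  obtain ⟨N, hN⟩ := hsmall 1 one_pos
  have hes := (summable_and_abs_sqrt_mul_tsum_le hN zero_le_one h0 h1).1
  have hD := (hes.hasSum.add ((hasSum_halfCoeff h0 h1).mul_left a)).tsum_eq
  have hs : 0 < √(1 - x) := Real.sqrt_pos.2 (by linarith)
  have hterm : (fun k => e k * x ^ k + a * (halfCoeff k * x ^ k)) = fun k => D k * x ^ k := by
    funext k
    simp only [he]
    ring
  rw [hterm] at hD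
  rw [hD]
  field_simp

/-- Abelian theorem. If `(D_k)` is a sequence of non-negative reals such
that `L = lim_k √k · D_k` exists, then
`lim_{σ→0⁺} tanh σ · Σ' k, D_k · cosh(σ)^{-2k} = √π · L`, and equivalently
`lim_{ζ→0⁺} ζ^{1/2} · Σ' k, D_k e^{-kζ} = √π · L`. -/
theorem abelian_theorem (D : ℕ → ℝ) (hD : ∀ k, 0 ≤ D k) (L : ℝ)
    (hL : Tendsto (fun k : ℕ => Real.sqrt k * D k) atTop (𝓝 L)) :
    Tendsto (fun σ : ℝ => Real.tanh σ * ∑' k : ℕ, D k * (Real.cosh σ ^ (2 * k))⁻¹)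
      (𝓝[>] 0) (𝓝 (Real.sqrt π * L)) ∧
    Tendsto (fun ζ : ℝ => Real.sqrt ζ * ∑' k : ℕ, D k * Real.exp (-(k : ℝ) * ζ))
      (𝓝[>] 0) (𝓝 (Real.sqrt π * L)) := by
  have hmain := tendsto_sqrt_mul_tsum D L hL
  have hpos : ∀ᶠ t : ℝ in 𝓝[>] 0, 0 < t := self_mem_nhdsWithin
  constructor
  · have hx : Tendsto (fun σ : ℝ => (Real.cosh σ ^ 2)⁻¹) (𝓝[>] 0) (𝓝[<] 1) := by
      refine tendsto_nhdsWithin_iff.2 ⟨?_, ?_⟩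
      · have hcont : Continuous fun σ : ℝ => (Real.cosh σ ^ 2)⁻¹ :=
          (Real.continuous_cosh.pow 2).inv₀ fun σ => (pow_pos (Real.cosh_pos σ) 2).ne'
        exact (hcont.tendsto' 0 _ (by simp)).mono_left nhdsWithin_le_nhds
      · filter_upwards [hpos] with σ hσ
        exact inv_lt_one_of_one_lt₀ (one_lt_pow₀ (Real.one_lt_cosh.2 hσ.ne') two_ne_zero)
    refine (hmain.comp hx).congr' ?_
    filter_upwards [hpos] with σ hσ
    have hc := Real.cosh_pos σ
    have ht : √(1 - (Real.cosh σ ^ 2)⁻¹) = Real.tanh σ := by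
      have hsq : 1 - (Real.cosh σ ^ 2)⁻¹ = Real.tanh σ ^ 2 := by
        rw [Real.tanh_eq_sinh_div_cosh]
        field_simp
        linarith [Real.cosh_sq σ]
      have : 0 ≤ Real.tanh σ := by
        rw [Real.tanh_eq_sinh_div_cosh]
        exact div_nonneg (Real.sinh_nonneg_iff.2 hσ.le) hc.le
      rw [hsq, Real.sqrt_sq this]
    simp only [Function.comp_apply, ht, inv_pow, ← pow_mul]
  · have hx : Tendsto (fun ζ : ℝ => Real.exp (-ζ)) (𝓝[>] 0) (𝓝[<] 1) := by
      refine tendsto_nhdsWithin_iff.2 ⟨?_, ?_⟩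
      · have hcont : Continuous fun ζ : ℝ => Real.exp (-ζ) := by fun_prop
        exact (hcont.tendsto' 0 _ (by simp)).mono_left nhdsWithin_le_nhds
      · filter_upwards [hpos] with ζ hζ
        simpa using hζ
    have hslope : Tendsto (fun ζ : ℝ => (1 - Real.exp (-ζ)) / ζ) (𝓝[>] 0) (𝓝 1) := by
      have hd : HasDerivAt (fun ζ : ℝ => 1 - Real.exp (-ζ)) 1 0 := by
        simpa using ((hasDerivAt_neg (0 : ℝ)).exp).const_sub 1
      have h := (hasDerivAt_iff_tendsto_slope.1 hd).mono_left
        (nhdsWithin_mono 0 fun t (ht : 0 < t) => ht.ne')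
      refine h.congr fun ζ => ?_
      simp [slope_def_field]
    have hratio : Tendsto (fun ζ : ℝ => (√((1 - Real.exp (-ζ)) / ζ))⁻¹) (𝓝[>] 0) (𝓝 1) := by
      have h := hslope.sqrt.inv₀ (by simp)
      simpa using h
    have h := hratio.mul (hmain.comp hx)
    rw [one_mul] at h
    refine h.congr' ?_
    filter_upwards [hpos] with ζ hζ
    have h1 : 0 < 1 - Real.exp (-ζ) := sub_pos.2 ((by simpa using hζ))
    have hs1 : 0 < √(1 - Real.exp (-ζ)) := Real.sqrt_pos.2 h1
    have hs2 : 0 < √ζ := Real.sqrt_pos.2 hζ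
    have hterm : ∀ k : ℕ, Real.exp (-ζ) ^ k = Real.exp (-(k : ℝ) * ζ) := fun k => by
      rw [← Real.exp_nat_mul]
      ring_nf
    simp only [Function.comp_apply, hterm, Real.sqrt_div h1.le]
    field_simp
end

section
/- Let d ≥ 2 be an integer, q > 2 a real number, and Λ > 0; set α := ((q−2)/2)√Λ, β := (qΛ/2)^{1/(q−2)}, and u(s) := β (cosh(αs))^{−2/(q−2)} for s ∈ ℝ. Then ((q−1)(q−2)/4) · ( (q−1)/(∫_𝒞 u^q d(s,ω)) · (∫_𝒞 u^{2q−2} ω_d² d(s,ω))² − ((q−3)/3) ∫_𝒞 u^{3q−4} ω_d⁴ d(s,ω) ) = (β^{3q−4}/α) · (|𝕊^{d−1}|/(4d²)) · (Γ((3q−4)/(q−2)) √π / Γ((3q−4)/(q−2) + 1/2)) · (q−1)(q−2) · ( q(5q−6)/(2(3q−2)) − d(q−3)/(d+2) ), where the integrals are over the cylinder 𝒞 = ℝ × 𝕊^{d−1} with respect to the product of Lebesgue measure and surface measure, ω_d is the last Cartesian coordinate restricted to 𝕊^{d−1}, |𝕊^{d−1}| is the surface measure of the unit sphere, and Γ is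 the Gamma function. -/
/-!
By Fubini every integral over the cylinder is a one-dimensional integral times a spherical moment.

The axial factor is `∫ u^p ds = (β^p / α) J(p / (q - 2))` with
`J(a) = ∫ cosh(s)^{-2a} ds = √π Γ(a) / Γ(a + 1/2)`. The substitution `x = 1 / (1 + e^{-2s})` turns
`J(a)` into the Beta integral `2^{2a-1} B(a, a)`, and the duplication formula finishes the
evaluation (`integral_cosh_rpow`). The exponents `q`, `2q - 2`, `3q - 4` correspond to `a`, `a + 1`,
`a + 2` with `a = q / (q - 2)`, so `Γ(s + 1) = s Γ(s)` relates the three integrals.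

The spherical moments `∫ ω_d² = |𝕊^{d-1}| / d` and `∫ ω_d⁴ = 3 |𝕊^{d-1}| / (d (d + 2))` come from
evaluating `∫ x_d^{2m} e^{-|x|²} dx` over `ℝ^d` both in Cartesian coordinates
(`gaussian_cartesian`) and in polar coordinates (`gaussian_polar`).
-/

open MeasureTheory Real Filter Topology Set
open scoped RealInnerProductSpace

noncomputable section

/-- Euclidean space ℝ^d. -/
abbrev Ed (d : ℕ) : Type := EuclideanSpace ℝ (Fin d)

/-- The unit sphere 𝕊^{d-1}. -/
abbrev Sph (d : ℕ) := Metric.sphere (0 : Ed d) 1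

/-- The surface measure on the unit sphere. -/
def sphMeasure (d : ℕ) : Measure (Sph d) := (volume : Measure (Ed d)).toSphere

/-- The natural measure on the cylinder 𝒞 = ℝ × 𝕊^{d-1}. -/
def cylMeasure (d : ℕ) : Measure (ℝ × Sph d) := (volume : Measure ℝ).prod (sphMeasure d)

/-- The total surface measure |𝕊^{d-1}|. -/
def sphVol (d : ℕ) : ℝ := (sphMeasure d Set.univ).toReal

/-- The last Cartesian coordinate on ℝ^d. -/
def coordLast (d : ℕ) (x : Ed d) : ℝ :=
  if h : 0 < d then x ⟨d - 1, Nat.sub_lt h one_pos⟩ else 0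

/-- Value of a function of the ambient variables at a point of the cylinder. -/
def cylVal (d : ℕ) (φ : ℝ × Ed d → ℝ) (p : ℝ × Sph d) : ℝ := φ (p.1, (p.2 : Ed d))

/-- The partial derivative in the axial direction. -/
def dS (d : ℕ) (φ : ℝ × Ed d → ℝ) (p : ℝ × Sph d) : ℝ :=
  deriv (fun s => φ (s, (p.2 : Ed d))) p.1

/-- The tangential (spherical) gradient: the spatial gradient minus its radial component. -/
def sgrad (d : ℕ) (φ : ℝ × Ed d → ℝ) (p : ℝ × Sph d) : Ed d :=
  gradient (fun x => φ (p.1, x)) (p.2 : Ed d) -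
    ⟪gradient (fun x => φ (p.1, x)) (p.2 : Ed d), (p.2 : Ed d)⟫ • (p.2 : Ed d)

/-- The squared H¹(𝒞)-norm with parameter Λ. -/
def h1NormSq (d : ℕ) (Λ : ℝ) (φ : ℝ × Ed d → ℝ) : ℝ :=
  ∫ p, (dS d φ p ^ 2 + ‖sgrad d φ p‖ ^ 2 + Λ * cylVal d φ p ^ 2) ∂(cylMeasure d)

/-- The H¹(𝒞)-inner product with parameter Λ. -/
def h1Inner (d : ℕ) (Λ : ℝ) (φ ψ : ℝ × Ed d → ℝ) : ℝ :=
  ∫ p, (dS d φ p * dS d ψ p + ⟪sgrad d φ p, sgrad d ψ p⟫ +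
    Λ * cylVal d φ p * cylVal d ψ p) ∂(cylMeasure d)

/-- The L^q(𝒞)-norm. -/
def lqNorm (d : ℕ) (q : ℝ) (φ : ℝ × Ed d → ℝ) : ℝ :=
  (∫ p, |cylVal d φ p| ^ q ∂(cylMeasure d)) ^ (1 / q)

/-- Surrogate for membership in H¹(𝒞): a C¹ function of the ambient variables with
finite H¹-energy and finite L^q-norm on the cylinder. -/
def MemH1 (d : ℕ) (Λ q : ℝ) (φ : ℝ × Ed d → ℝ) : Prop :=
  ContDiff ℝ 1 φ ∧
  Integrable (fun p => dS d φ p ^ 2 + ‖sgrad d φ p‖ ^ 2 + Λ * cylVal d φ p ^ 2) (cylMeasure d) ∧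
  Integrable (fun p => |cylVal d φ p| ^ q) (cylMeasure d)

/-- The optimal constant C_* in the inequality ‖φ‖² ≥ C_* ‖φ‖_q². -/
def Cstar (d : ℕ) (Λ q : ℝ) : ℝ :=
  sSup {c : ℝ | ∀ φ, MemH1 d Λ q φ → c * lqNorm d q φ ^ 2 ≤ h1NormSq d Λ φ}

/-- α = ((q-2)/2)√Λ. -/
def alphaV (q Λ : ℝ) : ℝ := (q - 2) / 2 * Real.sqrt Λ

/-- β = (qΛ/2)^{1/(q-2)}. -/
def betaV (q Λ : ℝ) : ℝ := (q * Λ / 2) ^ (1 / (q - 2))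

/-- The radial optimizer u(s) = β cosh(αs)^{-2/(q-2)}. -/
def Ufun (q Λ : ℝ) (s : ℝ) : ℝ := betaV q Λ * Real.cosh (alphaV q Λ * s) ^ (-(2 / (q - 2)))

/-- u viewed as a function of the ambient cylinder variables. -/
def Ucyl (d : ℕ) (q Λ : ℝ) : ℝ × Ed d → ℝ := fun z => Ufun q Λ z.1

/-- The H¹-distance to the manifold ℳ = {λ u(· - t)} of optimizers. -/
def distM (d : ℕ) (Λ q : ℝ) (φ : ℝ × Ed d → ℝ) : ℝ :=
  ⨅ lt : ℝ × ℝ, Real.sqrt (h1NormSq d Λ fun z => φ z - lt.1 * Ufun q Λ (z.1 - lt.2))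

/-- The deficit functional F. -/
def deficitF (d : ℕ) (Λ q : ℝ) (φ : ℝ × Ed d → ℝ) : ℝ :=
  h1NormSq d Λ φ - Cstar d Λ q * lqNorm d q φ ^ 2

end

/-! ### Gaussian integrals and even spherical moments -/

lemma radial_gaussian (n : ℕ) :
    ∫ r in Ioi (0 : ℝ), r ^ n * rexp (-r ^ 2) = 1 / 2 * Real.Gamma (((n : ℝ) + 1) / 2) := by
  have h := integral_rpow_mul_exp_neg_rpow (p := 2) (q := n) two_pos
    (by have : (0 : ℝ) ≤ n := n.cast_nonneg
        linarith)
  rw [← h]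
  refine setIntegral_congr_fun measurableSet_Ioi fun x _ => ?_
  simp [Real.rpow_natCast]

lemma gaussian_even_moment (m : ℕ) :
    ∫ x : ℝ, x ^ (2 * m) * rexp (-x ^ 2) = Real.Gamma ((m : ℝ) + 1 / 2) := by
  have h := integral_comp_abs (f := fun x : ℝ => x ^ (2 * m) * rexp (-x ^ 2))
  rw [radial_gaussian] at h
  simp only [pow_mul, sq_abs] at h ⊢
  rw [h]
  push_cast
  ring_nf

/-- The Gaussian-weighted integral of an even power of one coordinate factorises over the
Cartesian coordinates. -/
lemma gaussian_cartesian (d : ℕ) (i : Fin d) (m : ℕ) :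
    ∫ x : Ed d, x i ^ (2 * m) * rexp (-‖x‖ ^ 2) =
      Real.Gamma ((m : ℝ) + 1 / 2) * √π ^ (d - 1) := by
  have h1 := (EuclideanSpace.volume_preserving_symm_measurableEquiv_toLp (Fin d)).integral_comp'
    (g := fun y : Fin d → ℝ => y i ^ (2 * m) * rexp (-∑ j, y j ^ 2))
  have h2 : ∀ y : Fin d → ℝ, y i ^ (2 * m) * rexp (-∑ j, y j ^ 2) =
      ∏ j, (y j ^ (2 * if j = i then m else 0) * rexp (-y j ^ 2)) := by
    intro y
    rw [Finset.prod_mul_distrib, ← Real.exp_sum, Finset.sum_neg_distrib]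
    congr 1
    rw [Finset.prod_eq_single i] <;> simp +contextual
  have h3 : ∀ x : Ed d, x i ^ (2 * m) * rexp (-‖x‖ ^ 2) =
      (fun y : Fin d → ℝ => y i ^ (2 * m) * rexp (-∑ j, y j ^ 2))
        ((MeasurableEquiv.toLp 2 (Fin d → ℝ)).symm x) := by
    intro x
    simp [EuclideanSpace.norm_sq_eq]
  simp_rw [h3]
  rw [h1]
  simp_rw [h2]
  rw [integral_fintype_prod_volume_eq_prod
    (fun (j : Fin d) (t : ℝ) => t ^ (2 * if j = i then m else 0) * rexp (-t ^ 2))]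
  simp_rw [gaussian_even_moment]
  rw [← Finset.mul_prod_erase _ _ (Finset.mem_univ i)]
  congr 1
  · simp
  · rw [Finset.prod_congr rfl (g := fun _ => √π)]
    · simp
    · intro j hj
      rw [if_neg (Finset.ne_of_mem_erase hj)]
      simpa using Real.Gamma_one_half_eq

/-- The same Gaussian integral in polar coordinates: it splits into the spherical moment and a
radial integral. -/
lemma gaussian_polar (d : ℕ) (i : Fin d) (k : ℕ) :
    ∫ x : Ed d, x i ^ k * rexp (-‖x‖ ^ 2) =
      (∫ w, (w : Ed d) i ^ k ∂(sphMeasure d)) *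
        ∫ r in Ioi (0 : ℝ), r ^ (d - 1 + k) * rexp (-r ^ 2) := by
  have hsph : ∫ x : Ed d, x i ^ k * rexp (-‖x‖ ^ 2) =
      ∫ p, ((p.1 : Ed d) i ^ k) * ((p.2 : ℝ) ^ k * rexp (-(p.2 : ℝ) ^ 2))
        ∂(sphMeasure d).prod (Measure.volumeIoiPow (Module.finrank ℝ (Ed d) - 1)) := by
    have : Nonempty (Fin d) := ⟨i⟩
    have hp := (Measure.measurePreserving_homeomorphUnitSphereProd
      (volume : Measure (Ed d))).integral_comp
      (homeomorphUnitSphereProd (Ed d)).measurableEmbedding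
      (fun p : Sph d × Ioi (0 : ℝ) =>
        ((p.1 : Ed d) i ^ k) * ((p.2 : ℝ) ^ k * rexp (-(p.2 : ℝ) ^ 2)))
    have hl := integral_subtype_comap (μ := (volume : Measure (Ed d)))
      (measurableSet_singleton (0 : Ed d)).compl (fun x : Ed d => x i ^ k * rexp (-‖x‖ ^ 2))
    rw [restrict_compl_singleton] at hl
    rw [sphMeasure, ← hp, ← hl]
    refine integral_congr_ae (Eventually.of_forall fun x => ?_)
    have hx : ‖(x : Ed d)‖ ≠ 0 := norm_ne_zero_iff.mpr x.2
    simp only [homeomorphUnitSphereProd_apply_fst_coe, homeomorphUnitSphereProd_apply_snd_coe,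
      PiLp.smul_apply, smul_eq_mul]
    rw [mul_pow, inv_pow]
    field_simp
  have : IsFiniteMeasure (sphMeasure d) := by
    unfold sphMeasure
    infer_instance
  rw [hsph, integral_prod_mul (fun w : Sph d => (w : Ed d) i ^ k)
    (fun r : Ioi (0 : ℝ) => (r : ℝ) ^ k * rexp (-(r : ℝ) ^ 2))]
  congr 1
  simp only [Measure.volumeIoiPow, ENNReal.ofReal]
  rw [integral_withDensity_eq_integral_smul
      ((measurable_subtype_coe.pow_const _).real_toNNReal),
    integral_subtype_comap measurableSet_Ioi
      fun a : ℝ ↦ Real.toNNReal (a ^ (Module.finrank ℝ (Ed d) - 1)) • (a ^ k * rexp (-a ^ 2))]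
  refine setIntegral_congr_fun measurableSet_Ioi fun x hx ↦ ?_
  simp only [NNReal.smul_def, Real.coe_toNNReal _ (pow_nonneg hx.out.le _), smul_eq_mul,
    finrank_euclideanSpace, Fintype.card_fin]
  ring

/-- Comparing the Cartesian and polar evaluations of the Gaussian integral gives all even moments
of a coordinate on the sphere. -/
lemma sphere_moment (d : ℕ) (i : Fin d) (m : ℕ) :
    (∫ w, (w : Ed d) i ^ (2 * m) ∂(sphMeasure d)) * Real.Gamma ((d : ℝ) / 2 + m) =
      2 * √π ^ (d - 1) * Real.Gamma ((m : ℝ) + 1 / 2) := by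
  have h := gaussian_polar d i (2 * m)
  rw [gaussian_cartesian, radial_gaussian] at h
  have hd : 1 ≤ d := i.pos
  have e : (((d - 1 + 2 * m : ℕ) : ℝ) + 1) / 2 = (d : ℝ) / 2 + m := by
    push_cast [hd]
    ring
  rw [e] at h
  linarith

/-! ### Spherical moments of order two and four -/

lemma sphere_moment_zero (d : ℕ) (hd : 2 ≤ d) :
    sphVol d * Real.Gamma ((d : ℝ) / 2) = 2 * √π ^ (d - 1) * √π := by
  have h := sphere_moment d ⟨d - 1, by omega⟩ 0
  simpa [sphVol, Measure.real, ← one_div, Real.Gamma_one_half_eq] using h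

lemma sphere_coord_sq (d : ℕ) (hd : 2 ≤ d) :
    ∫ w, coordLast d (w : Ed d) ^ 2 ∂(sphMeasure d) = sphVol d / d := by
  have hd0 : (0 : ℝ) < d := by positivity
  have h0 := sphere_moment_zero d hd
  have h := sphere_moment d ⟨d - 1, by omega⟩ 1
  have hG := Real.Gamma_pos_of_pos (half_pos hd0)
  simp only [coordLast, dif_pos (show 0 < d by omega)]
  rw [show ((1 : ℕ) : ℝ) + 1 / 2 = 1 / 2 + 1 by norm_num, Real.Gamma_add_one (by norm_num),
    Real.Gamma_one_half_eq, Nat.cast_one, Real.Gamma_add_one (by positivity), mul_one] at h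
  rw [eq_div_iff hd0.ne']
  refine mul_right_cancel₀ hG.ne' ?_
  linear_combination 2 * h - h0

lemma sphere_coord_four (d : ℕ) (hd : 2 ≤ d) :
    ∫ w, coordLast d (w : Ed d) ^ 4 ∂(sphMeasure d) = 3 * sphVol d / (d * (d + 2)) := by
  have hd0 : (0 : ℝ) < d := by positivity
  have h0 := sphere_moment_zero d hd
  have h := sphere_moment d ⟨d - 1, by omega⟩ 2
  have hG := Real.Gamma_pos_of_pos (half_pos hd0)
  simp only [coordLast, dif_pos (show 0 < d by omega)]
  rw [show ((2 : ℕ) : ℝ) + 1 / 2 = 1 / 2 + 1 + 1 by norm_num, Real.Gamma_add_one (by norm_num),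
    Real.Gamma_add_one (by norm_num), Real.Gamma_one_half_eq,
    show (d : ℝ) / 2 + (2 : ℕ) = d / 2 + 1 + 1 by push_cast; ring,
    Real.Gamma_add_one (by positivity), Real.Gamma_add_one (by positivity)] at h
  rw [eq_div_iff (by positivity)]
  refine mul_right_cancel₀ hG.ne' ?_
  linear_combination 4 * h - 3 * h0

/-! ### The one-dimensional integral of a power of `cosh` -/

/-- With `x = 1 / (1 + e^{-2s})` one has `4 x (1 - x) = cosh(s)⁻²`. -/
lemma sigmoid_cosh (s : ℝ) :
    4 * (Real.sigmoid (2 * s) * (1 - Real.sigmoid (2 * s))) = (Real.cosh s ^ 2)⁻¹ := by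
  rw [← Real.sigmoid_neg, Real.sigmoid_def, Real.sigmoid_def, Real.cosh_eq, neg_neg]
  have e1 : rexp (2 * s) = rexp s ^ 2 := by rw [two_mul, Real.exp_add, sq]
  have e2 : rexp (-(2 * s)) = (rexp s ^ 2)⁻¹ := by rw [Real.exp_neg, e1]
  rw [e1, e2, Real.exp_neg]
  have := Real.exp_pos s
  field_simp
  ring

lemma beta_integral_real (a : ℝ) (ha : 0 < a) :
    ∫ x in Ioo (0 : ℝ) 1, (x * (1 - x)) ^ (a - 1) =
      Real.Gamma a * Real.Gamma a / Real.Gamma (2 * a) := by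
  have h := Complex.betaIntegral_eq_Gamma_mul_div (a : ℂ) a (by simpa) (by simpa)
  rw [Complex.betaIntegral, intervalIntegral.integral_of_le zero_le_one,
    integral_Ioc_eq_integral_Ioo] at h
  rw [two_mul, ← Complex.ofReal_inj, ← integral_complex_ofReal]
  push_cast [← Complex.Gamma_ofReal]
  rw [← h]
  refine setIntegral_congr_fun measurableSet_Ioo fun x hx => ?_
  have hx0 : 0 ≤ x := hx.1.le
  have hx1 : 0 ≤ 1 - x := by linarith [hx.2]
  rw [Real.mul_rpow hx0 hx1]
  push_cast [Complex.ofReal_cpow hx0, Complex.ofReal_cpow hx1]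
  rfl

/-- The substitution `x = 1 / (1 + e^{-2s})` turns the integral into `2^{2a-1} B(a, a)`, which the
duplication formula for `Γ` simplifies. -/
lemma integral_cosh_rpow (a : ℝ) (ha : 0 < a) :
    ∫ s : ℝ, Real.cosh s ^ (-(2 * a)) = Real.Gamma a * √π / Real.Gamma (a + 1 / 2) := by
  have hderiv : ∀ s : ℝ, HasDerivAt (fun s => Real.sigmoid (2 * s))
      (2 * (Real.sigmoid (2 * s) * (1 - Real.sigmoid (2 * s)))) s := by
    intro s
    have := (Real.hasDerivAt_sigmoid (2 * s)).comp s ((hasDerivAt_id s).const_mul 2)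
    refine this.congr_deriv ?_
    ring
  have himg : (fun s => Real.sigmoid (2 * s)) '' univ = Ioo (0 : ℝ) 1 := by
    rw [← Real.range_sigmoid, image_univ]
    exact (mul_left_surjective₀ (two_ne_zero' ℝ)).range_comp Real.sigmoid
  have h := integral_image_eq_integral_abs_deriv_smul MeasurableSet.univ
    (fun s _ => (hderiv s).hasDerivWithinAt)
    (fun x _ y _ hxy => by simpa using Real.sigmoid_injective hxy)
    (fun x : ℝ => (x * (1 - x)) ^ (a - 1))
  rw [himg, beta_integral_real a ha, setIntegral_univ] at h
  have hint : ∀ s : ℝ, |2 * (Real.sigmoid (2 * s) * (1 - Real.sigmoid (2 * s)))| •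
      (Real.sigmoid (2 * s) * (1 - Real.sigmoid (2 * s))) ^ (a - 1) =
      2 ^ (1 - 2 * a) * Real.cosh s ^ (-(2 * a)) := by
    intro s
    have hpos : 0 < Real.sigmoid (2 * s) * (1 - Real.sigmoid (2 * s)) :=
      mul_pos (Real.sigmoid_pos _) (by linarith [Real.sigmoid_lt_one (2 * s)])
    have hc := Real.cosh_pos s
    rw [abs_of_pos (by positivity), smul_eq_mul, mul_assoc,
      ← Real.rpow_one_add' hpos.le (by linarith),
      show Real.sigmoid (2 * s) * (1 - Real.sigmoid (2 * s)) = ((2 * Real.cosh s) ^ 2)⁻¹ by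
        rw [mul_pow, mul_inv, ← sigmoid_cosh]; ring,
      Real.inv_rpow (by positivity), ← Real.rpow_natCast, ← Real.rpow_mul (by positivity),
      ← Real.rpow_neg (by positivity), Real.mul_rpow (by positivity) hc.le,
      sub_eq_add_neg (1 : ℝ) (2 * a), Real.rpow_add two_pos, Real.rpow_one]
    push_cast
    ring_nf
  simp_rw [hint] at h
  rw [integral_const_mul] at h
  have hdup := Real.Gamma_mul_Gamma_add_half a
  have g1 := Real.Gamma_pos_of_pos ha
  have g2 := Real.Gamma_pos_of_pos (show 0 < a + 1 / 2 by linarith)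
  have g3 := Real.Gamma_pos_of_pos (show 0 < 2 * a by linarith)
  have hp : (0 : ℝ) < 2 ^ (1 - 2 * a) := by positivity
  rw [div_eq_iff g3.ne'] at h
  rw [eq_div_iff g2.ne']
  refine mul_left_cancel₀ (mul_pos (mul_pos g1 hp) g3).ne' ?_
  linear_combination (-(Real.Gamma a * Real.Gamma (a + 1 / 2))) * h +
    Real.Gamma a * Real.Gamma a * hdup

/-! ### The integrals over the cylinder -/

lemma alphaV_pos (q Λ : ℝ) (hq : 2 < q) (hΛ : 0 < Λ) : 0 < alphaV q Λ := by
  have : 0 < q - 2 := by linarith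
  unfold alphaV
  positivity

lemma betaV_pos (q Λ : ℝ) (hq : 2 < q) (hΛ : 0 < Λ) : 0 < betaV q Λ := by
  unfold betaV
  positivity

lemma integral_Ufun_rpow (q Λ p : ℝ) (hq : 2 < q) (hΛ : 0 < Λ) (hp : 0 < p) :
    ∫ s : ℝ, Ufun q Λ s ^ p = betaV q Λ ^ p / alphaV q Λ *
      (Real.Gamma (p / (q - 2)) * √π / Real.Gamma (p / (q - 2) + 1 / 2)) := by
  have hα := alphaV_pos q Λ hq hΛ
  have hβ := betaV_pos q Λ hq hΛ
  have hq2 : 0 < q - 2 := by linarith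
  have h : ∀ s : ℝ, Ufun q Λ s ^ p =
      betaV q Λ ^ p * Real.cosh (alphaV q Λ * s) ^ (-(2 * (p / (q - 2)))) := by
    intro s
    have hc := Real.cosh_pos (alphaV q Λ * s)
    rw [Ufun, Real.mul_rpow hβ.le (by positivity), ← Real.rpow_mul hc.le]
    congr 2
    ring
  simp_rw [h]
  rw [integral_const_mul,
    Measure.integral_comp_mul_left (fun t => Real.cosh t ^ (-(2 * (p / (q - 2))))),
    integral_cosh_rpow _ (by positivity), abs_of_pos (by positivity), smul_eq_mul]
  ring

lemma integral_cyl_mul (d : ℕ) (f : ℝ → ℝ) (g : Sph d → ℝ) :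
    ∫ p, f p.1 * g p.2 ∂(cylMeasure d) = (∫ s, f s) * ∫ w, g w ∂(sphMeasure d) := by
  have : IsFiniteMeasure (sphMeasure d) := by
    unfold sphMeasure
    infer_instance
  exact integral_prod_mul f g

lemma sphVol_pos (d : ℕ) (hd : 2 ≤ d) : 0 < sphVol d := by
  have hd0 : (0 : ℝ) < d := by positivity
  have hG := Real.Gamma_pos_of_pos (half_pos hd0)
  have h := sphere_moment_zero d hd
  have : 0 < sphVol d * Real.Gamma ((d : ℝ) / 2) := by
    rw [h]
    positivity
  exact pos_of_mul_pos_left this hG.le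


/-- Explicit computation of the quartic term (B)/μ⁴. For `d ≥ 2`,
`q > 2`, `Λ > 0`,
`((q-1)(q-2)/4)((q-1)/(∫ u^q)·(∫ u^{2q-2}ω_d²)² - ((q-3)/3)∫ u^{3q-4}ω_d⁴)
  = (β^{3q-4}/α)(|𝕊^{d-1}|/(4d²))(Γ((3q-4)/(q-2))√π/Γ((3q-4)/(q-2)+1/2))(q-1)(q-2)
    (q(5q-6)/(2(3q-2)) - d(q-3)/(d+2))`. -/
theorem quartic_term_value (d : ℕ) (hd : 2 ≤ d) (q Λ : ℝ) (hq : 2 < q) (hΛ : 0 < Λ) :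
    (q - 1) * (q - 2) / 4 *
      ((q - 1) / (∫ p, Ufun q Λ p.1 ^ q ∂(cylMeasure d)) *
          (∫ p, Ufun q Λ p.1 ^ (2 * q - 2) * coordLast d (p.2 : Ed d) ^ 2 ∂(cylMeasure d)) ^ 2 -
        (q - 3) / 3 *
          ∫ p, Ufun q Λ p.1 ^ (3 * q - 4) * coordLast d (p.2 : Ed d) ^ 4 ∂(cylMeasure d)) =
    betaV q Λ ^ (3 * q - 4) / alphaV q Λ * (sphVol d / (4 * (d : ℝ) ^ 2)) *
      (Real.Gamma ((3 * q - 4) / (q - 2)) * Real.sqrt π /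
        Real.Gamma ((3 * q - 4) / (q - 2) + 1 / 2)) *
      ((q - 1) * (q - 2)) *
      (q * (5 * q - 6) / (2 * (3 * q - 2)) - (d : ℝ) * (q - 3) / ((d : ℝ) + 2)) := by
  have hα := alphaV_pos q Λ hq hΛ
  have hβ := betaV_pos q Λ hq hΛ
  have hV := sphVol_pos d hd
  have hd0 : (0 : ℝ) < d := by positivity
  have hq2 : 0 < q - 2 := by linarith
  have hB : betaV q Λ ^ (2 * q - 2) * betaV q Λ ^ (2 * q - 2) =
      betaV q Λ ^ q * betaV q Λ ^ (3 * q - 4) := by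
    rw [← Real.rpow_add hβ, ← Real.rpow_add hβ]
    ring_nf
  have hI0 : ∫ p, Ufun q Λ p.1 ^ q ∂(cylMeasure d) = (∫ s, Ufun q Λ s ^ q) * sphVol d := by
    simpa [sphVol, Measure.real] using
      integral_cyl_mul d (fun s => Ufun q Λ s ^ q) (fun _ => 1)
  rw [hI0, integral_cyl_mul d (fun s => Ufun q Λ s ^ (2 * q - 2))
      (fun w => coordLast d (w : Ed d) ^ 2),
    integral_cyl_mul d (fun s => Ufun q Λ s ^ (3 * q - 4)) (fun w => coordLast d (w : Ed d) ^ 4),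
    sphere_coord_sq d hd, sphere_coord_four d hd,
    integral_Ufun_rpow q Λ q hq hΛ (by linarith),
    integral_Ufun_rpow q Λ (2 * q - 2) hq hΛ (by linarith),
    integral_Ufun_rpow q Λ (3 * q - 4) hq hΛ (by linarith)]
  -- The three Gamma arguments are `a`, `a + 1`, `a + 2` with `a = q / (q - 2)`.
  have e1 : (2 * q - 2) / (q - 2) = q / (q - 2) + 1 := by field_simp; ring
  have e2 : (3 * q - 4) / (q - 2) = q / (q - 2) + 1 + 1 := by field_simp; ring
  obtain ⟨a, ha⟩ : ∃ a, a = q / (q - 2) := ⟨_, rfl⟩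
  have ha0 : 0 < a := by rw [ha]; positivity
  rw [e1, e2, ← ha, show a + 1 + 1 + 1 / 2 = a + 1 / 2 + 1 + 1 by ring,
    show a + 1 + 1 / 2 = a + 1 / 2 + 1 by ring,
    Real.Gamma_add_one (s := a + 1) (by positivity), Real.Gamma_add_one (s := a) (by positivity),
    Real.Gamma_add_one (s := a + 1 / 2 + 1) (by positivity),
    Real.Gamma_add_one (s := a + 1 / 2) (by positivity)]
  have g1 := Real.Gamma_pos_of_pos ha0
  have g2 := Real.Gamma_pos_of_pos (show 0 < a + 1 / 2 by linarith)
  have b0 : 0 < betaV q Λ ^ q := by positivity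
  have hs : 0 < √π := by positivity
  generalize betaV q Λ ^ q = B0 at *
  generalize betaV q Λ ^ (2 * q - 2) = B1 at *
  generalize betaV q Λ ^ (3 * q - 4) = B2 at *
  generalize Real.Gamma a = G at *
  generalize Real.Gamma (a + 1 / 2) = H at *
  generalize √π = P at *
  generalize sphVol d = V at *
  generalize alphaV q Λ = A at *
  have hB2 : B2 = B1 * B1 / B0 := by rw [hB]; field_simp
  have h1 : a + 1 / 2 = (3 * q - 2) / (2 * (q - 2)) := by rw [ha]; field_simp; ring
  have h2 : a + 1 = 2 * (q - 1) / (q - 2) := by rw [ha]; field_simp; ring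
  have h3 : a + 1 / 2 + 1 = (5 * q - 6) / (2 * (q - 2)) := by rw [ha]; field_simp; ring
  rw [h3, h1, h2, ha, hB2]
  -- `field_simp` normalises the denominators to the form with the literal on the right.
  have n1 : q - 1 ≠ 0 := ne_of_gt (by linarith)
  have n2 : q * 3 - 2 ≠ 0 := ne_of_gt (by linarith)
  have n3 : q * 5 - 6 ≠ 0 := ne_of_gt (by linarith)
  have n4 : q ≠ 0 := ne_of_gt (by linarith)
  field_simp
end
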